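/- arXiv:1501.04008 — 2 statements merged into one kernel-verified Lean document; each statement's English description precedes it below -/
import Mathlib

section
/- For every Swiss cheese D with δ(D) > 0, there exists a classical Swiss cheese D' with X_{D'} ⊆ X_D and δ(D') ≥ δ(D). -/
/-- An open disc in the complex plane: a set of the form `B(z,r)` with `r > 0`. -/
def IsOpenDisc (D : Set ℂ) : Prop := ∃ z : ℂ, ∃ r : ℝ, 0 < r ∧ D = Metric.ball z r

/-- A closed disc in the complex plane: `{w : |w - z| ≤ r}` with `r > 0`. -/
def IsClosedDisc (D : Set ℂ) : Prop := ∃ z : ℂ, ∃ r : ℝ, 0 < r ∧ D = Metric.closedBall z r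

/-- The radius of a disc, computed as half its diameter (so `r = 0` for `∅` or singletons). -/
noncomputable def discRadius (D : Set ℂ) : ℝ := Metric.diam D / 2

/-- A Swiss cheese: a closed disc `Δ` together with a countable collection `𝒟` of open discs. -/
structure SwissCheese where
  Δ : Set ℂ
  𝒟 : Set (Set ℂ)
  hΔ : IsClosedDisc Δ
  h𝒟 : ∀ D ∈ 𝒟, IsOpenDisc D
  hcount : 𝒟.Countable

/-- `D̃ = 𝒟 ∪ {ℂ ∖ Δ}`. -/
def SwissCheese.tilde (D : SwissCheese) : Set (Set ℂ) := D.𝒟 ∪ {D.Δᶜ}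

/-- The associated Swiss cheese set `X_D = Δ ∖ ⋃ 𝒟`. -/
def SwissCheese.X (D : SwissCheese) : Set ℂ := D.Δ \ ⋃₀ D.𝒟

/-- The (possibly infinite) sum of the radii of a collection of discs. -/
noncomputable def radSum (S : Set (Set ℂ)) : ENNReal :=
  ∑' D : S, ENNReal.ofReal (discRadius D)

/-- `δ(D) = r(Δ) − Σ_{D'∈𝒟} r(D')`, possibly `−∞`. -/
noncomputable def SwissCheese.delta (D : SwissCheese) : EReal :=
  (discRadius D.Δ : EReal) - ((radSum D.𝒟 : ENNReal) : EReal)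

/-- An allocation map between Swiss cheeses. -/
structure IsAllocationMap (D E : SwissCheese) (f : Set ℂ → Set ℂ) : Prop where
  maps_to : ∀ U ∈ D.tilde, f U ∈ E.tilde
  a1 : ∀ U ∈ D.tilde, U ⊆ f U
  a2 : ENNReal.ofReal (discRadius D.Δ - discRadius E.Δ) ≤
      radSum {U | U ∈ D.𝒟 ∧ f U = E.Δᶜ}
  a3 : ∀ E' ∈ E.𝒟, ENNReal.ofReal (discRadius E') ≤ radSum {U | U ∈ D.𝒟 ∧ f U = E'}

/-- A Swiss cheese is classical if the closures of the discs in `𝒟` intersect neither one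
another nor `ℂ ∖ int Δ`, and the sum of the radii is finite. -/
def SwissCheese.IsClassical (D : SwissCheese) : Prop :=
  (∀ D1 ∈ D.𝒟, ∀ D2 ∈ D.𝒟, D1 ≠ D2 → closure D1 ∩ closure D2 = ∅) ∧
  (∀ D' ∈ D.𝒟, closure D' ⊆ interior D.Δ) ∧
  radSum D.𝒟 < ⊤

/-!
Two discs of radii `s` and `t` whose closures meet lie in a single disc of radius `s + t`, and a
disc of radius `s` whose closure is not inside the open outer disc can be discarded at the cost of
replacing the outer disc by a smaller one avoiding it, of radius reduced by `s`. Neither move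
enlarges the Swiss cheese set or changes `δ`, so one wants to repeat them until the cheese is
classical. Zorn's lemma does this in two passes: a maximal partition of the discs into classes `A`
that fit into a disc of radius `∑ i ∈ A, r i` leaves disjoint closed discs, and a maximal set of
discs absorbed by the outer one leaves the others in its interior. Unions of chains are admissible
since the admissible centres of the new discs form nested compact sets.
-/

open Metric

section Partitions

variable {ι : Type*}

lemma setoid_sSup_iff_of_directedOn {c : Set (Setoid ι)} (hne : c.Nonempty)
    (hc : DirectedOn (· ≤ ·) c) {i j : ι} : sSup c i j ↔ ∃ P ∈ c, P i j := by
  refine ⟨fun h ↦ ?_, fun ⟨P, hP, h⟩ ↦ le_sSup hP h⟩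
  rw [Setoid.sSup_eq_eqvGen] at h
  induction h with
  | rel _ _ h => exact h
  | refl i => exact ⟨hne.some, hne.some_mem, hne.some.refl' i⟩
  | symm _ _ _ ih =>
    obtain ⟨P, hP, h⟩ := ih
    exact ⟨P, hP, P.symm' h⟩
  | trans _ _ _ _ _ ih₁ ih₂ =>
    obtain ⟨P₁, hP₁, h₁⟩ := ih₁
    obtain ⟨P₂, hP₂, h₂⟩ := ih₂
    obtain ⟨P, hP, hle₁, hle₂⟩ := hc P₁ hP₁ P₂ hP₂
    exact ⟨P, hP, P.trans' (hle₁ h₁) (hle₂ h₂)⟩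

lemma setoid_sSup_class_eq_sUnion_of_directedOn {c : Set (Setoid ι)} (hne : c.Nonempty)
    (hc : DirectedOn (· ≤ ·) c) (i : ι) :
    {j | sSup c i j} = ⋃₀ ((fun P : Setoid ι ↦ {j | P i j}) '' c) := by
  ext j
  simp [setoid_sSup_iff_of_directedOn hne hc]

lemma setoid_class_eq_fiber (P : Setoid ι) (i : ι) :
    {j | P i j} = Quotient.mk P ⁻¹' {Quotient.mk P i} := by
  ext j
  exact P.comm'.trans Quotient.eq.symm

/-- The equivalence relation obtained from `P` by merging its classes `p` and `q`, encoded as the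
kernel of the quotient map followed by the map sending `p` to `q` and fixing all else. -/
def mergeClasses (P : Setoid ι) [DecidableEq (Quotient P)] (p q : Quotient P) : Setoid ι :=
  Setoid.ker fun i ↦ Function.update id p q (Quotient.mk P i)

lemma mergeClasses_iff {P : Setoid ι} [DecidableEq (Quotient P)] {p q : Quotient P} {i j : ι} :
    mergeClasses P p q i j ↔
      Function.update id p q (Quotient.mk P i) = Function.update id p q (Quotient.mk P j) :=
  Iff.rfl

lemma le_mergeClasses (P : Setoid ι) [DecidableEq (Quotient P)] (p q : Quotient P) :
    P ≤ mergeClasses P p q :=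
  fun _ _ h ↦ congrArg _ (Quotient.sound h)

lemma mergeClasses_out (P : Setoid ι) [DecidableEq (Quotient P)] (p q : Quotient P) :
    mergeClasses P p q p.out q.out := by
  simp [mergeClasses_iff, Function.update_apply]

lemma mergeClasses_class_eq_or_eq (P : Setoid ι) [DecidableEq (Quotient P)] (p q : Quotient P)
    (i : ι) :
    {j | mergeClasses P p q i j} = Quotient.mk P ⁻¹' {p} ∪ Quotient.mk P ⁻¹' {q} ∨
      {j | mergeClasses P p q i j} = Quotient.mk P ⁻¹' {Quotient.mk P i} := by
  simp only [Set.ext_iff, mergeClasses_iff, Function.update_apply, Set.mem_ofPred_eq,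
    Set.mem_union, Set.mem_preimage, Set.mem_singleton_iff, id]
  by_cases hi : Quotient.mk P i = p ∨ Quotient.mk P i = q
  · left; grind
  · right; grind

theorem exists_setoid_pairwise_not_union {G : Set ι → Prop} (hsingleton : ∀ i, G {i})
    (hchain : ∀ c : Set (Set ι), c.Nonempty → IsChain (· ⊆ ·) c → (∀ A ∈ c, G A) → G (⋃₀ c)) :
    ∃ P : Setoid ι, (∀ q : Quotient P, G (Quotient.mk P ⁻¹' {q})) ∧
      Pairwise fun p q : Quotient P ↦ ¬ G (Quotient.mk P ⁻¹' {p} ∪ Quotient.mk P ⁻¹' {q}) := by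
  classical
  have hbot : ∀ i, G {j | (⊥ : Setoid ι) i j} := fun i ↦ by
    convert hsingleton i using 1
    exact Set.ext fun _ ↦ eq_comm
  have hsSup : ∀ c : Set (Setoid ι), c.Nonempty → IsChain (· ≤ ·) c →
      (∀ P ∈ c, ∀ i, G {j | P i j}) → ∀ i, G {j | sSup c i j} := fun c hne hc hcG i ↦ by
    rw [setoid_sSup_class_eq_sUnion_of_directedOn hne hc.directedOn]
    have hmono : Monotone fun P : Setoid ι ↦ {j | P i j} := fun _ _ hle _ hj ↦ hle hj
    exact hchain _ (hne.image _) (hmono.isChain_image hc)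
      (Set.forall_mem_image.2 fun P hP ↦ hcG P hP i)
  obtain ⟨P, -, hP⟩ := zorn_le_nonempty₀ {P : Setoid ι | ∀ i, G {j | P i j}}
    (fun c hcG hc P hPc ↦ ⟨sSup c, hsSup c ⟨P, hPc⟩ hc hcG, fun _ ↦ le_sSup⟩) ⊥ hbot
  have hfiber : ∀ i, G (Quotient.mk P ⁻¹' {Quotient.mk P i}) :=
    fun i ↦ setoid_class_eq_fiber P i ▸ hP.prop i
  refine ⟨P, Quotient.ind hfiber, fun p q hpq hG ↦ hpq (Quotient.out_equiv_out.1 ?_)⟩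
  have hmerge : ∀ i, G {j | mergeClasses P p q i j} := fun i ↦ by
    rcases mergeClasses_class_eq_or_eq P p q i with h | h <;> rw [h]
    exacts [hG, hfiber i]
  exact hP.le_of_ge hmerge (le_mergeClasses P p q) (mergeClasses_out P p q)

end Partitions

section Weight

variable {ι : Type*} {r : ι → ℝ}

/-- The total weight of a set of indices, for a summable family of weights `r`. For the radii of a
family of balls it is the radius of the single ball that replaces the balls indexed by `A`. -/
noncomputable def weight (r : ι → ℝ) (A : Set ι) : ℝ := ∑' i : A, r i

lemma weight_empty (r : ι → ℝ) : weight r ∅ = 0 := tsum_empty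

lemma weight_singleton (r : ι → ℝ) (i : ι) : weight r {i} = r i := tsum_singleton i r

lemma weight_union (hsum : Summable r) {A B : Set ι} (h : Disjoint A B) :
    weight r (A ∪ B) = weight r A + weight r B :=
  Summable.tsum_union_disjoint h (hsum.subtype A) (hsum.subtype B)

lemma weight_add_weight_compl (hsum : Summable r) (A : Set ι) :
    weight r A + weight r Aᶜ = ∑' i, r i :=
  Summable.tsum_add_tsum_compl (hsum.subtype A) (hsum.subtype Aᶜ)

lemma weight_nonneg (hr : ∀ i, 0 ≤ r i) (A : Set ι) : 0 ≤ weight r A :=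
  tsum_nonneg fun i : A ↦ hr i

lemma weight_mono (hr : ∀ i, 0 ≤ r i) (hsum : Summable r) : Monotone (weight r) := fun A B h ↦ by
  rw [← Set.union_sdiff_cancel h, weight_union hsum Set.disjoint_sdiff_right]
  exact le_add_of_nonneg_right (weight_nonneg hr _)

lemma le_weight (hr : ∀ i, 0 ≤ r i) (hsum : Summable r) {A : Set ι} {i : ι} (hi : i ∈ A) :
    r i ≤ weight r A :=
  weight_singleton r i ▸ weight_mono hr hsum (Set.singleton_subset_iff.2 hi)

lemma hasSum_weight_fiber {κ : Type*} (hsum : Summable r) (f : ι → κ) :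
    HasSum (fun k ↦ weight r (f ⁻¹' {k})) (∑' i, r i) :=
  hsum.hasSum.tsum_fiberwise f

end Weight

section Centers

variable {ι X : Type*} [PseudoMetricSpace X] {a : ι → X} {r : ι → ℝ} {c : X} {R : ℝ}

/-- The centres `z` for which the ball of radius `s` about `z` encloses every ball
`ball (a i) (r i)` with `i ∈ A`, expressed through the triangle inequality. -/
def enclosingCenters (a : ι → X) (r : ι → ℝ) (A : Set ι) (s : ℝ) : Set X :=
  {z | ∀ i ∈ A, r i + dist (a i) z ≤ s}

/-- The centres `z` for which the ball of radius `R - s` about `z` lies in `closedBall c R` and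
avoids every ball `ball (a i) (r i)` with `i ∈ A`, expressed through the triangle inequality. -/
def inscribedCenters (c : X) (R : ℝ) (a : ι → X) (r : ι → ℝ) (A : Set ι) (s : ℝ) : Set X :=
  {z | dist z c ≤ s ∧ ∀ i ∈ A, r i + (R - s) ≤ dist (a i) z}

lemma enclosingCenters_anti (a : ι → X) (r : ι → ℝ) (s : ℝ) :
    Antitone fun A ↦ enclosingCenters a r A s :=
  fun _ _ h _ hz i hi ↦ hz i (h hi)

lemma enclosingCenters_mono (a : ι → X) (r : ι → ℝ) (A : Set ι) :
    Monotone (enclosingCenters a r A) :=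
  fun _ _ h _ hz i hi ↦ (hz i hi).trans h

lemma inscribedCenters_anti (c : X) (R : ℝ) (a : ι → X) (r : ι → ℝ) (s : ℝ) :
    Antitone fun A ↦ inscribedCenters c R a r A s :=
  fun _ _ h _ hz ↦ ⟨hz.1, fun i hi ↦ hz.2 i (h hi)⟩

lemma inscribedCenters_mono (c : X) (R : ℝ) (a : ι → X) (r : ι → ℝ) (A : Set ι) :
    Monotone (inscribedCenters c R a r A) :=
  fun _ _ h _ hz ↦ ⟨hz.1.trans h, fun i hi ↦ by linarith [hz.2 i hi]⟩

lemma isClosed_enclosingCenters (a : ι → X) (r : ι → ℝ) (A : Set ι) (s : ℝ) :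
    IsClosed (enclosingCenters a r A s) := by
  simp only [enclosingCenters, Set.ofPred_forall]
  exact isClosed_biInter fun i _ ↦ isClosed_le (by fun_prop) continuous_const

lemma isClosed_inscribedCenters (c : X) (R : ℝ) (a : ι → X) (r : ι → ℝ) (A : Set ι) (s : ℝ) :
    IsClosed (inscribedCenters c R a r A s) := by
  simp only [inscribedCenters, Set.ofPred_and, Set.ofPred_forall]
  exact (isClosed_le (by fun_prop) continuous_const).inter
    (isClosed_biInter fun i _ ↦ isClosed_le continuous_const (by fun_prop))

lemma isCompact_enclosingCenters [ProperSpace X] (a : ι → X) (r : ι → ℝ) {A : Set ι}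
    (hA : A.Nonempty) (s : ℝ) : IsCompact (enclosingCenters a r A s) := by
  obtain ⟨i, hi⟩ := hA
  refine (isCompact_closedBall (a i) (s - r i)).of_isClosed_subset
    (isClosed_enclosingCenters a r A s) fun z hz ↦ ?_
  rw [mem_closedBall']
  linarith [hz i hi]

lemma isCompact_inscribedCenters [ProperSpace X] (c : X) (R : ℝ) (a : ι → X) (r : ι → ℝ)
    (A : Set ι) (s : ℝ) : IsCompact (inscribedCenters c R a r A s) :=
  (isCompact_closedBall c s).of_isClosed_subset (isClosed_inscribedCenters c R a r A s)
    fun _ hz ↦ hz.1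

lemma nonempty_iInter_of_isChain {Y : Type*} [TopologicalSpace Y] {L : Set ι → Set Y}
    (hL : Antitone L) {C : Set (Set ι)} (hC : C.Nonempty) (hchain : IsChain (· ⊆ ·) C)
    (hne : ∀ A ∈ C, (L A).Nonempty) (hcompact : ∀ A ∈ C, IsCompact (L A))
    (hclosed : ∀ A ∈ C, IsClosed (L A)) : (⋂ A : C, L A).Nonempty := by
  have := hC.to_subtype
  refine IsCompact.nonempty_iInter_of_directed_nonempty_isCompact_isClosed (fun A : C ↦ L A) ?_
    (fun A ↦ hne A A.2) (fun A ↦ hcompact A A.2) (fun A ↦ hclosed A A.2)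
  exact hchain.directedOn.directed_val.mono_comp _ fun _ _ h ↦ hL h

lemma enclosingCenters_weight_sUnion_nonempty [ProperSpace X] (hr : ∀ i, 0 ≤ r i)
    (hsum : Summable r) {C : Set (Set ι)} (hC : C.Nonempty) (hchain : IsChain (· ⊆ ·) C)
    (hne : ∀ A ∈ C, A.Nonempty ∧ (enclosingCenters a r A (weight r A)).Nonempty) :
    (enclosingCenters a r (⋃₀ C) (weight r (⋃₀ C))).Nonempty := by
  obtain ⟨z, hz⟩ := nonempty_iInter_of_isChain (enclosingCenters_anti a r (weight r (⋃₀ C)))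
    hC hchain
    (fun A hA ↦ (hne A hA).2.mono
      (enclosingCenters_mono a r A (weight_mono hr hsum (Set.subset_sUnion_of_mem hA))))
    (fun A hA ↦ isCompact_enclosingCenters a r (hne A hA).1 _)
    (fun A _ ↦ isClosed_enclosingCenters a r A _)
  rw [Set.mem_iInter] at hz
  exact ⟨z, fun i ⟨A, hA, hi⟩ ↦ hz ⟨A, hA⟩ i hi⟩

lemma inscribedCenters_weight_sUnion_nonempty [ProperSpace X] (hr : ∀ i, 0 ≤ r i)
    (hsum : Summable r) {C : Set (Set ι)} (hC : C.Nonempty) (hchain : IsChain (· ⊆ ·) C)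
    (hne : ∀ A ∈ C, (inscribedCenters c R a r A (weight r A)).Nonempty) :
    (inscribedCenters c R a r (⋃₀ C) (weight r (⋃₀ C))).Nonempty := by
  obtain ⟨z, hz⟩ := nonempty_iInter_of_isChain (inscribedCenters_anti c R a r (weight r (⋃₀ C)))
    hC hchain
    (fun A hA ↦ (hne A hA).mono
      (inscribedCenters_mono c R a r A (weight_mono hr hsum (Set.subset_sUnion_of_mem hA))))
    (fun A _ ↦ isCompact_inscribedCenters c R a r A _)
    (fun A _ ↦ isClosed_inscribedCenters c R a r A _)
  rw [Set.mem_iInter] at hz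
  exact ⟨z, (hz ⟨_, hC.some_mem⟩).1, fun i ⟨A, hA, hi⟩ ↦ (hz ⟨A, hA⟩).2 i hi⟩

end Centers

section Disjointing

variable {ι E : Type*} [SeminormedAddCommGroup E] [NormedSpace ℝ E] {a : ι → E} {r : ι → ℝ}

lemma enclosingCenters_union_nonempty {A B : Set ι} {s t : ℝ} (hs : 0 ≤ s) (ht : 0 ≤ t) {x y : E}
    (hx : x ∈ enclosingCenters a r A s) (hy : y ∈ enclosingCenters a r B t)
    (hxy : dist x y ≤ s + t) : (enclosingCenters a r (A ∪ B) (s + t)).Nonempty := by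
  obtain ⟨z, hxz, hzy⟩ := exists_dist_le_le ht hs hxy
  refine ⟨z, fun i hi ↦ ?_⟩
  rcases hi with hi | hi
  · linarith [hx i hi, dist_triangle (a i) x z]
  · linarith [hy i hi, dist_triangle (a i) y z, dist_comm z y]

theorem exists_setoid_pairwise_disjoint_closedBall [ProperSpace E] (a : ι → E)
    (hr : ∀ i, 0 ≤ r i) (hsum : Summable r) :
    ∃ (P : Setoid ι) (z : Quotient P → E),
      Pairwise (Function.onFun Disjoint fun q ↦
        closedBall (z q) (weight r (Quotient.mk P ⁻¹' {q}))) ∧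
      ∀ i, ball (a i) (r i) ⊆
        ball (z (Quotient.mk P i)) (weight r (Quotient.mk P ⁻¹' {Quotient.mk P i})) := by
  obtain ⟨P, hP, hmax⟩ := exists_setoid_pairwise_not_union
    (G := fun A ↦ A.Nonempty ∧ (enclosingCenters a r A (weight r A)).Nonempty)
    (fun i ↦ ⟨Set.singleton_nonempty i, a i, by simp [enclosingCenters, weight_singleton]⟩)
    (fun C hC hchain hG ↦ ⟨Set.nonempty_sUnion.2 (hC.imp fun A hA ↦ ⟨hA, (hG A hA).1⟩),
      enclosingCenters_weight_sUnion_nonempty hr hsum hC hchain hG⟩)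
  choose hne z hz using hP
  refine ⟨P, z, fun p q hpq ↦ closedBall_disjoint_closedBall ?_,
    fun i ↦ ball_subset_ball' (hz _ i rfl)⟩
  by_contra! hdist
  refine hmax hpq ⟨(hne p).inl, ?_⟩
  rw [weight_union hsum (Set.disjoint_singleton.2 hpq |>.preimage _)]
  exact enclosingCenters_union_nonempty (weight_nonneg hr _) (weight_nonneg hr _) (hz p) (hz q)
    hdist

end Disjointing

section Absorbing

variable {ι E : Type*} [NormedAddCommGroup E] [NormedSpace ℝ E] [Nontrivial E]
  {a : ι → E} {r : ι → ℝ} {c : E} {R : ℝ}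

lemma exists_dist_eq_and_dist_add_eq (x y : E) {s : ℝ} (hs : 0 ≤ s) :
    ∃ z, dist x z = s ∧ dist y z = dist y x + s := by
  obtain ⟨v, hray, hv⟩ : ∃ v, SameRay ℝ (x - y) v ∧ ‖v‖ = s := by
    rcases eq_or_ne x y with rfl | hxy
    · obtain ⟨v, hv⟩ := exists_norm_eq E hs
      exact ⟨v, by simp, hv⟩
    · have hpos : 0 < ‖x - y‖ := norm_sub_pos_iff.2 hxy
      refine ⟨(s / ‖x - y‖) • (x - y), SameRay.sameRay_nonneg_smul_right _ (by positivity), ?_⟩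
      rw [norm_smul, Real.norm_of_nonneg (by positivity), div_mul_cancel₀ _ hpos.ne']
  refine ⟨x + v, by simpa using hv, ?_⟩
  rw [dist_comm y, dist_comm y, dist_eq_norm, dist_eq_norm, add_sub_right_comm, hray.norm_add, hv]

lemma inscribedCenters_insert_nonempty {A : Set ι} {s : ℝ} {z : E} {j : ι} (hj : 0 ≤ r j)
    (hz : z ∈ inscribedCenters c R a r A s) (hjz : R - s ≤ r j + dist (a j) z) :
    (inscribedCenters c R a r (insert j A) (r j + s)).Nonempty := by
  obtain ⟨w, hzw, hjw⟩ := exists_dist_eq_and_dist_add_eq z (a j) hj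
  refine ⟨w, by linarith [hz.1, dist_triangle_left w c z], fun i hi ↦ ?_⟩
  rcases hi with rfl | hi
  · linarith
  · linarith [hz.2 i hi, dist_triangle_right (a i) z w]

theorem exists_closedBall_subset_diff_iUnion_ball [ProperSpace E] (c : E) (R : ℝ) (a : ι → E)
    (hr : ∀ i, 0 ≤ r i) (hsum : Summable r) :
    ∃ (A : Set ι) (z : E),
      closedBall z (R - weight r A) ⊆ closedBall c R \ ⋃ i ∈ A, ball (a i) (r i) ∧
      ∀ j ∉ A, closedBall (a j) (r j) ⊆ ball z (R - weight r A) := by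
  obtain ⟨A, -, hA⟩ := zorn_subset_nonempty
    {A | (inscribedCenters c R a r A (weight r A)).Nonempty}
    (fun C hCG hchain hC ↦ ⟨⋃₀ C, inscribedCenters_weight_sUnion_nonempty hr hsum hC hchain hCG,
      fun _ ↦ Set.subset_sUnion_of_mem⟩)
    ∅ ⟨c, by simp [inscribedCenters, weight_empty]⟩
  obtain ⟨z, hz⟩ := hA.prop
  refine ⟨A, z, Set.subset_sdiff.2 ⟨?_, ?_⟩, fun j hj ↦ closedBall_subset_ball' ?_⟩
  · exact closedBall_subset_closedBall' (by linarith [hz.1])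
  · exact Set.disjoint_iUnion₂_right.2 fun i hi ↦
      (ball_disjoint_closedBall (hz.2 i hi)).symm
  · by_contra! hjz
    have hinsert : weight r (insert j A) = r j + weight r A := by
      rw [Set.insert_eq, weight_union hsum (Set.disjoint_singleton_left.2 hj), weight_singleton]
    have hmem : (inscribedCenters c R a r (insert j A) (weight r (insert j A))).Nonempty :=
      hinsert ▸ inscribedCenters_insert_nonempty (hr j) hz hjz
    exact hj (hA.le_of_ge hmem (Set.subset_insert j A) (Set.mem_insert j A))

theorem exists_pairwise_disjoint_closedBall_subset_ball [ProperSpace E] (c : E) (R : ℝ)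
    (a : ι → E) (hr : ∀ i, 0 < r i) (hsum : Summable r) :
    ∃ (P : Setoid ι) (B : Set (Quotient P)) (w : E) (R' : ℝ) (z : B → E) (s : B → ℝ),
      (∀ q, 0 < s q) ∧ Summable s ∧ R' - ∑' q, s q = R - ∑' i, r i ∧
      Pairwise (Function.onFun Disjoint fun q ↦ closedBall (z q) (s q)) ∧
      (∀ q, closedBall (z q) (s q) ⊆ ball w R') ∧
      closedBall w R' \ ⋃ q, ball (z q) (s q) ⊆ closedBall c R \ ⋃ i, ball (a i) (r i) := by
  have hr₀ : ∀ i, 0 ≤ r i := fun i ↦ (hr i).le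
  obtain ⟨P, z, hdisj, hcover⟩ := exists_setoid_pairwise_disjoint_closedBall a hr₀ hsum
  set s : Quotient P → ℝ := fun q ↦ weight r (Quotient.mk P ⁻¹' {q})
  have hs : HasSum s (∑' i, r i) := hasSum_weight_fiber hsum _
  have hpos : ∀ q, 0 < s q := Quotient.ind fun i ↦ (hr i).trans_le (le_weight hr₀ hsum rfl)
  obtain ⟨A, w, hw, hout⟩ :=
    exists_closedBall_subset_diff_iUnion_ball c R z (fun q ↦ (hpos q).le) hs.summable
  refine ⟨P, Aᶜ, w, R - weight s A, fun q ↦ z q, fun q ↦ s q, fun q ↦ hpos q,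
    hs.summable.subtype _, ?_, fun p q hpq ↦ hdisj (Subtype.coe_ne_coe.2 hpq),
    fun q ↦ hout q q.2, ?_⟩
  · rw [← hs.tsum_eq, ← weight_add_weight_compl hs.summable A, sub_add_eq_sub_sub, weight, weight]
  · rintro x ⟨hx, hxB⟩
    refine ⟨(hw hx).1, fun hxa ↦ ?_⟩
    obtain ⟨i, hi⟩ := Set.mem_iUnion.1 hxa
    by_cases hq : Quotient.mk P i ∈ A
    · exact (hw hx).2 (Set.mem_biUnion hq (hcover i hi))
    · exact hxB (Set.mem_iUnion.2 ⟨⟨_, hq⟩, hcover i hi⟩)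

end Absorbing

lemma discRadius_ball (z : ℂ) {s : ℝ} (hs : 0 ≤ s) : discRadius (ball z s) = s := by
  rw [discRadius, diam_ball_eq z hs, mul_div_cancel_left₀ s two_ne_zero]

lemma discRadius_closedBall (z : ℂ) {s : ℝ} (hs : 0 ≤ s) : discRadius (closedBall z s) = s := by
  rw [discRadius, diam_closedBall_eq z hs, mul_div_cancel_left₀ s two_ne_zero]

lemma injective_ball_of_pairwise_disjoint_closedBall {ι X : Type*} [PseudoMetricSpace X]
    {a : ι → X} {r : ι → ℝ} (hr : ∀ i, 0 < r i)
    (hdisj : Pairwise (Function.onFun Disjoint fun i ↦ closedBall (a i) (r i))) :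
    Function.Injective fun i ↦ ball (a i) (r i) := by
  intro i j (hij : ball (a i) (r i) = ball (a j) (r j))
  by_contra hne
  have hmem : a i ∈ ball (a j) (r j) := hij ▸ mem_ball_self (hr i)
  exact Set.disjoint_left.1 (hdisj hne) (mem_closedBall_self (hr i).le)
    (ball_subset_closedBall hmem)

namespace SwissCheese

/-- The Swiss cheese with closed disc `closedBall c R` and open discs `ball (a i) (r i)`. Using an
indexed family lets us compute with centres and radii; `delta` counts a repeated disc only once. -/
def ofBalls {ι : Type*} [Countable ι] (c : ℂ) {R : ℝ} (hR : 0 < R) (a : ι → ℂ) {r : ι → ℝ}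
    (hr : ∀ i, 0 < r i) : SwissCheese where
  Δ := closedBall c R
  𝒟 := Set.range fun i ↦ ball (a i) (r i)
  hΔ := ⟨c, R, hR, rfl⟩
  h𝒟 := Set.forall_mem_range.2 fun i ↦ ⟨a i, r i, hr i, rfl⟩
  hcount := Set.countable_range _

theorem exists_eq_ofBalls (D : SwissCheese) :
    ∃ (ι : Type) (_ : Countable ι) (c : ℂ) (R : ℝ) (hR : 0 < R) (a : ι → ℂ) (r : ι → ℝ)
      (hr : ∀ i, 0 < r i),
      Function.Injective (fun i ↦ ball (a i) (r i)) ∧ D = ofBalls c hR a hr := by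
  obtain ⟨Δ, 𝒟, ⟨c, R, hR, rfl⟩, h𝒟, hcount⟩ := D
  choose a r hr hball using fun U : 𝒟 ↦ h𝒟 U U.2
  have hval : (fun U : 𝒟 ↦ ball (a U) (r U)) = Subtype.val := funext fun U ↦ (hball U).symm
  refine ⟨𝒟, hcount.to_subtype, c, R, hR, a, r, hr, hval ▸ Subtype.val_injective, ?_⟩
  simp only [ofBalls, hval, Subtype.range_coe]

variable {ι : Type*} [Countable ι] {c : ℂ} {R : ℝ} {hR : 0 < R} {a : ι → ℂ} {r : ι → ℝ}
  {hr : ∀ i, 0 < r i}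

lemma X_ofBalls : (ofBalls c hR a hr).X = closedBall c R \ ⋃ i, ball (a i) (r i) := by
  rw [X, ofBalls, Set.sUnion_range]

lemma radSum_ofBalls (hinj : Function.Injective fun i ↦ ball (a i) (r i)) :
    radSum (ofBalls c hR a hr).𝒟 = ∑' i, ENNReal.ofReal (r i) := by
  rw [radSum, ofBalls, tsum_range (fun U ↦ ENNReal.ofReal (discRadius U)) hinj]
  simp_rw [discRadius_ball _ (hr _).le]

lemma summable_of_delta_pos (hinj : Function.Injective fun i ↦ ball (a i) (r i))
    (hδ : 0 < (ofBalls c hR a hr).delta) : Summable r := by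
  have hfinite : ∑' i, ENNReal.ofReal (r i) ≠ ⊤ := fun h ↦ by
    simp [delta, radSum_ofBalls hinj, h] at hδ
  simpa only [ENNReal.toReal_ofReal (hr _).le] using ENNReal.summable_toReal hfinite

lemma delta_ofBalls (hinj : Function.Injective fun i ↦ ball (a i) (r i)) (hsum : Summable r) :
    (ofBalls c hR a hr).delta = ((R - ∑' i, r i : ℝ) : EReal) := by
  have hr' : ∀ i, 0 ≤ r i := fun i ↦ (hr i).le
  rw [delta, radSum_ofBalls hinj, ← ENNReal.ofReal_tsum_of_nonneg hr' hsum,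
    EReal.coe_ennreal_ofReal, max_eq_left (tsum_nonneg hr'), EReal.coe_sub]
  exact congrArg (fun ρ : ℝ ↦ (ρ : EReal) - _) (discRadius_closedBall c hR.le)

theorem isClassical_ofBalls (hsum : Summable r)
    (hdisj : Pairwise (Function.onFun Disjoint fun i ↦ closedBall (a i) (r i)))
    (hsub : ∀ i, closedBall (a i) (r i) ⊆ ball c R) : (ofBalls c hR a hr).IsClassical := by
  refine ⟨?_, ?_, ?_⟩
  · rintro _ ⟨i, rfl⟩ _ ⟨j, rfl⟩ hij
    rw [← Set.disjoint_iff_inter_eq_empty]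
    exact (hdisj (ne_of_apply_ne (fun i ↦ ball (a i) (r i)) hij)).mono
      closure_ball_subset_closedBall closure_ball_subset_closedBall
  · rintro _ ⟨i, rfl⟩
    exact (closure_ball_subset_closedBall.trans (hsub i)).trans ball_subset_interior_closedBall
  · rw [radSum_ofBalls (injective_ball_of_pairwise_disjoint_closedBall hr hdisj)]
    exact hsum.tsum_ofReal_lt_top

end SwissCheese

theorem exists_classical_swiss_cheese (D : SwissCheese) (hδ : 0 < D.delta) :
    ∃ D' : SwissCheese, D'.IsClassical ∧ D'.X ⊆ D.X ∧ D.delta ≤ D'.delta := by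
  obtain ⟨ι, _, c, R, hR, a, r, hr, hinj, rfl⟩ := D.exists_eq_ofBalls
  have hsum : Summable r := SwissCheese.summable_of_delta_pos hinj hδ
  rw [SwissCheese.delta_ofBalls hinj hsum] at hδ ⊢
  obtain ⟨P, B, w, R', z, s, hs, hs_sum, hdelta, hdisj, hsub, hX⟩ :=
    exists_pairwise_disjoint_closedBall_subset_ball c R a hr hsum
  have hR' : 0 < R' := by
    have hs_nonneg : 0 ≤ ∑' q, s q := tsum_nonneg fun q ↦ (hs q).le
    have hδ' : 0 < R' - ∑' q, s q := hdelta ▸ EReal.coe_pos.1 hδ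
    linarith
  have hinj' := injective_ball_of_pairwise_disjoint_closedBall hs hdisj
  refine ⟨.ofBalls w hR' z hs, SwissCheese.isClassical_ofBalls hs_sum hdisj hsub, ?_, ?_⟩
  · rwa [SwissCheese.X_ofBalls, SwissCheese.X_ofBalls]
  · rw [SwissCheese.delta_ofBalls hinj' hs_sum, hdelta]
end

section
/- Let X be a semiclassical Swiss cheese set, with semiclassical Swiss cheese D = (Δ, 𝒟). Let γ_Δ be the positively oriented boundary circle of Δ and, for each D' ∈ 𝒟, γ_{D'} the negatively oriented boundary circle of D'. Then μ := μ_{γ_Δ} + Σ_{D'∈𝒟} μ_{γ_{D'}} defines a regular complex Borel measure on X of finite total variation (using Σ r(D') < ∞), whose support equals the boundary ∂X. -/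
open MeasureTheory

/-- The complex measure `μ_γ` associated to the circle `t ↦ z + r·exp(ε·i·t)`, `t ∈ [0,2π]`
(so `ε = 1` gives positive orientation, `ε = -1` negative orientation), characterised by
`∫ f dμ_γ = ∫_γ f dz`.  It is constructed as the image under the parametrisation of the
vector measure with density `γ'(t)` with respect to Lebesgue measure on `[0,2π]`. -/
noncomputable def circleVM (z : ℂ) (r : ℝ) (ε : ℝ) : VectorMeasure ℂ ℂ :=
  VectorMeasure.map
    ((volume.restrict (Set.Ioc (0 : ℝ) (2 * Real.pi))).withDensityᵥ
      (fun t : ℝ => (ε : ℂ) * Complex.I * (r : ℂ) * Complex.exp ((ε : ℂ) * Complex.I * (t : ℂ))))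
    (fun t : ℝ => z + (r : ℂ) * Complex.exp ((ε : ℂ) * Complex.I * (t : ℂ)))

/-- The support of a complex (vector) measure: the points all of whose neighbourhoods contain
a measurable set of non-zero measure. -/
def vmSupport (μ : VectorMeasure ℂ ℂ) : Set ℂ :=
  {z : ℂ | ∀ U : Set ℂ, IsOpen U → z ∈ U → ∃ A ⊆ U, MeasurableSet A ∧ μ A ≠ 0}

/-! The measure of a circle is `ε i (w - z) dθ`, so its total variation is `r dθ`, whose support is
the whole circle. Distinct circles meet in at most two points, so these variations are mutually
singular: nothing cancels in the sum, and its support is the closure of the union of the circles.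
That closure is the boundary of the Swiss cheese, because a connected neighbourhood of a boundary
point interior to `Δ` meets a deleted disc without being contained in it, hence meets its boundary
circle. -/

open Set Metric Real Complex
open scoped Topology ENNReal

section Topological

variable {X : Type*} [TopologicalSpace X]

theorem inter_frontier_nonempty_of_isPreconnected {s t : Set X} (hs : IsPreconnected s)
    (hst : (s ∩ t).Nonempty) (hst' : (s \ t).Nonempty) : (s ∩ frontier t).Nonempty := by
  by_contra! hempty
  have hcover : s ⊆ interior t ∪ interior tᶜ := by
    rw [← compl_frontier_eq_union_interior]
    exact (disjoint_iff_inter_eq_empty.2 hempty).subset_compl_right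
  obtain ⟨x, hxs, hxt⟩ := hst
  obtain ⟨y, hys, hyt⟩ := hst'
  obtain ⟨w, -, hwt, hwt'⟩ := hs _ _ isOpen_interior isOpen_interior hcover
    ⟨x, hxs, (hcover hxs).resolve_right fun h ↦ interior_subset h hxt⟩
    ⟨y, hys, (hcover hys).resolve_left fun h ↦ hyt (interior_subset h)⟩
  exact interior_subset hwt' (interior_subset hwt)

theorem frontier_sdiff_iUnion [LocallyConnectedSpace X] {ι : Type*} {K : Set X} {B : ι → Set X}
    (hK : IsClosed K) (hB : ∀ i, IsOpen (B i)) (hBK : ∀ i, B i ⊆ K)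
    (hdisj : Pairwise (Function.onFun Disjoint B)) :
    frontier (K \ ⋃ i, B i) = closure (frontier K ∪ ⋃ i, frontier (B i)) := by
  have hclosed : IsClosed (K \ ⋃ i, B i) := hK.sdiff (isOpen_iUnion hB)
  refine Subset.antisymm (fun x hx ↦ ?_)
    (closure_minimal (union_subset ?_ (iUnion_subset fun i ↦ ?_)) isClosed_frontier)
  · obtain ⟨hxK, hxB⟩ := hclosed.frontier_subset hx
    have hxc : x ∈ closure (K \ ⋃ i, B i)ᶜ := by
      rw [frontier_eq_closure_inter_closure] at hx
      exact hx.2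
    by_cases hxint : x ∈ interior K
    · refine mem_closure_iff_nhds.2 fun U hU ↦ ?_
      obtain ⟨V, ⟨hV, hxV, hVconn⟩, hVU⟩ := (LocallyConnectedSpace.open_connected_basis x).mem_iff.1
        (Filter.inter_mem hU (isOpen_interior.mem_nhds hxint))
      obtain ⟨y, hyV, hy⟩ := mem_closure_iff.1 hxc V hV hxV
      obtain ⟨i, hyi⟩ : ∃ i, y ∈ B i := by
        by_contra! hyB
        exact hy ⟨interior_subset (hVU hyV).2, by simpa using hyB⟩
      obtain ⟨w, hwV, hwi⟩ := inter_frontier_nonempty_of_isPreconnected hVconn.isPreconnected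
        ⟨y, hyV, hyi⟩ ⟨x, hxV, fun hxi ↦ hxB (mem_iUnion_of_mem i hxi)⟩
      exact ⟨w, (hVU hwV).1, Or.inr (mem_iUnion_of_mem i hwi)⟩
    · exact subset_closure (Or.inl (hK.frontier_eq ▸ ⟨hxK, hxint⟩))
  · intro x hx
    rw [hK.frontier_eq] at hx
    have hxB : x ∉ ⋃ i, B i := fun h ↦
      hx.2 (interior_maximal (iUnion_subset hBK) (isOpen_iUnion hB) h)
    rw [hclosed.frontier_eq]
    exact ⟨⟨hx.1, hxB⟩, fun h ↦ hx.2 (interior_mono sdiff_subset h)⟩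
  · intro x hx
    rw [(hB i).frontier_eq] at hx
    have hxB : x ∉ ⋃ j, B j := by
      simp only [mem_iUnion, not_exists]
      rintro j hxj
      rcases eq_or_ne i j with rfl | hij
      · exact hx.2 hxj
      · exact disjoint_left.1 ((hdisj hij).closure_left (hB j)) hx.1 hxj
    rw [frontier_eq_closure_inter_closure]
    refine ⟨subset_closure ⟨closure_minimal (hBK i) hK hx.1, hxB⟩, closure_mono ?_ hx.1⟩
    exact fun y hy hyX ↦ hyX.2 (mem_iUnion_of_mem i hy)

end Topological

theorem finite_sphere_inter_sphere {V P : Type*} [NormedAddCommGroup V] [InnerProductSpace ℝ V]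
    [MetricSpace P] [NormedAddTorsor V P] (hV : Module.finrank ℝ V = 2) {a b : P} {r s : ℝ}
    (h : (a, r) ≠ (b, s)) : (sphere a r ∩ sphere b s).Finite := by
  have : FiniteDimensional ℝ V := .of_finrank_pos (by lia)
  rcases eq_or_ne a b with rfl | hab
  · suffices sphere a r ∩ sphere a s = ∅ from this ▸ finite_empty
    refine eq_empty_of_forall_notMem fun w hw ↦ h ?_
    rw [← mem_sphere.1 hw.1, ← mem_sphere.1 hw.2]
  · by_cases hsub : (sphere a r ∩ sphere b s).Subsingleton
    · exact hsub.finite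
    · obtain ⟨p, hp, q, hq, hpq⟩ := not_subsingleton_iff.1 hsub
      exact (toFinite {p, q}).subset fun w hw ↦
        EuclideanGeometry.eq_of_dist_eq_of_dist_eq_of_finrank_eq_two
          hV hab hpq hp.1 hq.1 hw.1 hp.2 hq.2 hw.2

theorem hasSum_option {ι M : Type*} [AddCommMonoid M] [TopologicalSpace M] [ContinuousAdd M]
    {f : Option ι → M} {a : M} (hf : HasSum (fun i ↦ f (some i)) a) :
    HasSum f (f none + a) :=
  (hasSum_unique fun x : ({none} : Set (Option ι)) ↦ f x).add_isCompl
    (isCompl_range_some_none ι).symm ((Option.some_injective ι).hasSum_range_iff.2 hf)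

section VectorMeasures

variable {X E ι : Type*} [MeasurableSpace X] [NormedAddCommGroup E]

theorem exists_hasSum_of_tsum_variation_ne_top [CompleteSpace E] {v : ι → VectorMeasure X E}
    (hv : ∑' i, (v i).variation univ ≠ ∞) :
    ∃ μ : VectorMeasure X E, ∀ A, HasSum (fun i ↦ v i A) (μ A) := by
  have hsum (A : Set X) : Summable fun i ↦ v i A :=
    .of_enorm <| ne_top_of_le_ne_top hv <| ENNReal.tsum_le_tsum fun i ↦
      ((v i).enorm_measure_le_variation A).trans (measure_mono (subset_univ A))
  refine ⟨⟨fun A ↦ ∑' i, v i A, by simp, fun A hA ↦ by simp [VectorMeasure.not_measurable _ hA],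
    fun f hf hdisj ↦ ?_⟩, fun A ↦ (hsum A).hasSum⟩
  have hprod : Summable fun p : ℕ × ι ↦ v p.2 (f p.1) := by
    refine .of_enorm (ne_top_of_le_ne_top hv ?_)
    calc ∑' p : ℕ × ι, ‖v p.2 (f p.1)‖ₑ
      _ ≤ ∑' p : ℕ × ι, (v p.2).variation (f p.1) :=
        ENNReal.tsum_le_tsum fun p ↦ (v p.2).enorm_measure_le_variation (f p.1)
      _ = ∑' i, (v i).variation (⋃ n, f n) := by
        rw [ENNReal.tsum_prod (f := fun n i ↦ (v i).variation (f n)), ENNReal.tsum_comm]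
        exact tsum_congr fun i ↦ (measure_iUnion hdisj hf).symm
      _ ≤ ∑' i, (v i).variation univ :=
        ENNReal.tsum_le_tsum fun i ↦ measure_mono (subset_univ _)
  have htotal : HasSum (fun i ↦ v i (⋃ n, f n)) (∑' p : ℕ × ι, v p.2 (f p.1)) :=
    ((Equiv.prodComm ι ℕ).hasSum_iff.2 hprod.hasSum).prod_fiberwise
      fun i ↦ (v i).m_iUnion hf hdisj
  rw [htotal.tsum_eq]
  exact hprod.hasSum.prod_fiberwise fun n ↦ (hsum (f n)).hasSum

variable [Countable ι] {v : ι → VectorMeasure X E} {μ : VectorMeasure X E}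

theorem variation_le_variation_of_hasSum
    (hsing : Pairwise fun i j ↦ (v i).variation ⟂ₘ (v j).variation)
    (hμ : ∀ A, MeasurableSet A → HasSum (fun i ↦ v i A) (μ A)) (i : ι) :
    (v i).variation ≤ μ.variation := by
  -- Off the set `S`, `μ` agrees with `v i`, and `v i` vanishes on `S`.
  obtain ⟨S, hS, hiS, hSi⟩ : (v i).variation ⟂ₘ Measure.sum fun j : {j // i ≠ j} ↦
    (v j).variation := Measure.MutuallySingular.sum_right.2 fun j ↦ hsing j.2
  refine VectorMeasure.variation_le_of_forall_enorm_le fun A hA ↦ ?_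
  have hi : v i (A ∩ S) = 0 :=
    ((v i).variation_apply_eq_zero hS).1 hiS _ inter_subset_right (hA.inter hS)
  have hj (j : ι) (hj : j ≠ i) : v j (A \ S) = 0 :=
    ((v j).variation_apply_eq_zero hS.compl).1 (Measure.sum_apply_eq_zero.1 hSi ⟨j, hj.symm⟩) _
      (fun _ hx ↦ hx.2) (hA.diff hS)
  calc ‖v i A‖ₑ
    _ = ‖v i (A \ S)‖ₑ := by
      rw [← inter_union_sdiff A S, (v i).of_union disjoint_sdiff_inter.symm (hA.inter hS)
        (hA.diff hS), hi, zero_add, inter_union_sdiff]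
    _ = ‖μ (A \ S)‖ₑ := by rw [(hμ _ (hA.diff hS)).unique (hasSum_single i hj)]
    _ ≤ μ.variation (A \ S) := μ.enorm_measure_le_variation _
    _ ≤ μ.variation A := measure_mono sdiff_subset

theorem support_variation_of_hasSum [TopologicalSpace X] [OpensMeasurableSpace X]
    [HereditarilyLindelofSpace X]
    (hsing : Pairwise fun i j ↦ (v i).variation ⟂ₘ (v j).variation)
    (hμ : ∀ A, MeasurableSet A → HasSum (fun i ↦ v i A) (μ A)) :
    μ.variation.support = closure (⋃ i, (v i).variation.support) := by
  refine Subset.antisymm (Measure.support_subset_of_isClosed isClosed_closure ?_) <|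
    closure_minimal (iUnion_subset fun i ↦ ?_) Measure.isClosed_support
  · rw [mem_ae_iff, VectorMeasure.variation_apply_eq_zero measurableSet_closure.compl]
    intro A hA hAm
    have hzero (i : ι) : v i A = 0 := by
      refine (VectorMeasure.variation_apply_eq_zero hAm).1 ?_ A subset_rfl hAm
      refine measure_mono_null (hA.trans <| compl_subset_compl.2 ?_)
        (Measure.measure_compl_support (μ := (v i).variation))
      exact (subset_iUnion (fun i ↦ (v i).variation.support) i).trans subset_closure
    have hzeroSum : HasSum (fun _ : ι ↦ (0 : E)) (μ A) := by simpa only [hzero] using hμ A hAm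
    exact hzeroSum.unique hasSum_zero
  · exact Measure.support_mono (variation_le_variation_of_hasSum hsing hμ i)

end VectorMeasures

theorem vmSupport_eq_support_variation (μ : VectorMeasure ℂ ℂ) :
    vmSupport μ = μ.variation.support := by
  ext z
  rw [(nhds_basis_opens z).mem_measureSupport]
  simp only [vmSupport, mem_ofPred_eq, and_imp, pos_iff_ne_zero]
  refine forall_congr' fun U ↦ ⟨fun h hz hU ↦ ?_, fun h hU hz ↦ ?_⟩
  · simpa [VectorMeasure.variation_apply_eq_zero hU.measurableSet] using h hU hz
  · simpa [VectorMeasure.variation_apply_eq_zero hU.measurableSet] using h hz hU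

theorem support_map_of_continuous {X Y : Type*} [TopologicalSpace X] [MeasurableSpace X]
    [OpensMeasurableSpace X] [HereditarilyLindelofSpace X] [TopologicalSpace Y] [MeasurableSpace Y]
    [BorelSpace Y] {μ : Measure X} {f : X → Y} (hf : Continuous f) :
    (μ.map f).support = closure (f '' μ.support) := by
  refine Subset.antisymm (Measure.support_subset_of_isClosed isClosed_closure ?_)
    (closure_minimal (image_subset_iff.2 fun x hx ↦ ?_) Measure.isClosed_support)
  · rw [mem_ae_iff, Measure.map_apply hf.measurable measurableSet_closure.compl]
    refine measure_mono_null ?_ (Measure.measure_compl_support (μ := μ))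
    exact fun x hx hxμ ↦ hx (subset_closure (mem_image_of_mem f hxμ))
  · refine (Measure.mem_support_iff_forall _).2 fun U hU ↦ ?_
    exact ((Measure.mem_support_iff_forall x).1 hx _ (hf.continuousAt hU)).trans_le
      (Measure.le_map_apply hf.aemeasurable U)

theorem support_smul_of_ne_zero {X : Type*} [TopologicalSpace X] [MeasurableSpace X]
    {μ : Measure X} {a : ℝ≥0∞} (ha : a ≠ 0) :
    (a • μ).support = μ.support :=
  Subset.antisymm (Measure.smul_absolutelyContinuous.support_mono)
    (Measure.absolutelyContinuous_smul ha).support_mono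

theorem support_restrict_Ioc {X : Type*} [TopologicalSpace X] [LinearOrder X] [OrderTopology X]
    [DenselyOrdered X] [MeasurableSpace X] [OpensMeasurableSpace X] {μ : Measure X}
    [μ.IsOpenPosMeasure] {a b : X} (hab : a < b) : (μ.restrict (Ioc a b)).support = Icc a b := by
  refine Subset.antisymm ?_ ?_
  · exact closure_Ioc hab.ne ▸ Measure.support_restrict_subset.trans inter_subset_left
  · rw [← closure_Ioo hab.ne]
    refine closure_minimal (fun x hx ↦ Measure.interior_inter_support ⟨?_, ?_⟩)
      Measure.isClosed_support
    · exact interior_maximal Ioo_subset_Ioc_self isOpen_Ioo hx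
    · exact (Measure.support_eq_univ (μ := μ)).symm ▸ mem_univ x

theorem map_withDensityᵥ_comp {X Y E : Type*} [MeasurableSpace X] [MeasurableSpace Y]
    [NormedAddCommGroup E] [NormedSpace ℝ E] {μ : Measure X} {f : X → Y} {g : Y → E}
    (hf : Measurable f) (hg : Integrable g (μ.map f)) :
    (μ.withDensityᵥ (g ∘ f)).map f = (μ.map f).withDensityᵥ g := by
  ext A hA
  rw [VectorMeasure.map_apply _ hf hA, withDensityᵥ_apply (hg.comp_measurable hf) (hf hA),
    withDensityᵥ_apply hg hA, setIntegral_map hA hg.aestronglyMeasurable hf.aemeasurable]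
  rfl

/-- The angular measure `dθ` on the circle of centre `z` and radius `|r|`, traversed with angular
velocity `ε`; keeping `ε` lets both orientations of the circle be treated at once. -/
noncomputable def circleAngle (z : ℂ) (r ε : ℝ) : Measure ℂ :=
  (volume.restrict (Ioc 0 (2 * π))).map (circleMap z r ∘ (ε * ·))

section circleAngle

variable {z : ℂ} {r ε : ℝ}

theorem continuous_circleMap_mul : Continuous (circleMap z r ∘ (ε * ·)) :=
  (continuous_circleMap z r).comp (continuous_const_mul ε)

theorem circleAngle_univ : circleAngle z r ε univ = ENNReal.ofReal (2 * π) := by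
  simp [circleAngle, Measure.map_apply continuous_circleMap_mul.measurable]

theorem circleAngle_compl_sphere : circleAngle z r ε (sphere z |r|)ᶜ = 0 := by
  rw [circleAngle, Measure.map_apply continuous_circleMap_mul.measurable
    isClosed_sphere.measurableSet.compl]
  have hempty : circleMap z r ∘ (ε * ·) ⁻¹' (sphere z |r|)ᶜ = ∅ :=
    eq_empty_of_forall_notMem fun t ht ↦ ht (circleMap_mem_sphere' z r (ε * t))
  rw [hempty, measure_empty]

theorem circleAngle_of_countable (hr : r ≠ 0) (hε : ε ≠ 0) {s : Set ℂ} (hs : s.Countable) :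
    circleAngle z r ε s = 0 := by
  rw [circleAngle, Measure.map_apply continuous_circleMap_mul.measurable hs.measurableSet]
  exact ((hs.preimage_circleMap z hr).preimage (mul_right_injective₀ hε)).measure_zero _

theorem support_circleAngle (hε : |ε| = 1) : (circleAngle z r ε).support = sphere z |r| := by
  have hperiodic : Function.Periodic (circleMap z r ∘ (ε * ·)) (2 * π) := by
    rcases eq_or_eq_neg_of_abs_eq hε with rfl | rfl
    · simpa using periodic_circleMap z r
    · simpa [Function.Periodic, mul_add, add_comm] using fun t ↦ (periodic_circleMap z r).neg (-t)
  have hε0 : ε ≠ 0 := abs_pos.1 (hε ▸ one_pos)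
  rw [circleAngle, support_map_of_continuous continuous_circleMap_mul,
    support_restrict_Ioc two_pi_pos, ← zero_add (2 * π), hperiodic.image_Icc two_pi_pos,
    (mul_left_surjective₀ hε0).range_comp, range_circleMap, isClosed_sphere.closure_eq]

theorem mutuallySingular_circleAngle {a b : ℂ} {s δ : ℝ} (hr : r ≠ 0) (hε : ε ≠ 0)
    (h : (a, |r|) ≠ (b, |s|)) : circleAngle a r ε ⟂ₘ circleAngle b s δ := by
  refine .mk (s := (sphere a |r|)ᶜ ∪ (sphere a |r| ∩ sphere b |s|)) (t := (sphere b |s|)ᶜ)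
    (measure_union_null circleAngle_compl_sphere ?_) circleAngle_compl_sphere
    fun w _ ↦ by simp only [mem_union, mem_inter_iff, mem_compl_iff]; tauto
  exact circleAngle_of_countable hr hε
    (finite_sphere_inter_sphere finrank_real_complex h).countable

end circleAngle

section circleVM

variable {z : ℂ} {r ε : ℝ}

theorem integrable_velocity_circleAngle :
    Integrable (fun w ↦ ε * I * (w - z)) (circleAngle z r ε) := by
  rw [circleAngle, integrable_map_measure (by fun_prop) continuous_circleMap_mul.aemeasurable]
  exact Continuous.integrableOn_Ioc (by fun_prop)

theorem circleVM_eq_withDensityᵥ :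
    circleVM z r ε = (circleAngle z r ε).withDensityᵥ fun w ↦ ε * I * (w - z) := by
  rw [circleAngle, ← map_withDensityᵥ_comp continuous_circleMap_mul.measurable
    integrable_velocity_circleAngle, circleVM]
  congr 2
  · ext t
    simp only [Function.comp_apply, circleMap_sub_center, circleMap_zero, Complex.ofReal_mul]
    ring_nf
  · ext t
    simp only [Function.comp_apply, circleMap, Complex.ofReal_mul]
    ring_nf

theorem variation_circleVM (hε : |ε| = 1) :
    (circleVM z r ε).variation = ENNReal.ofReal |r| • circleAngle z r ε := by
  rw [circleVM_eq_withDensityᵥ, Measure.variation_withDensityᵥ integrable_velocity_circleAngle,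
    ← withDensity_const]
  refine withDensity_congr_ae ?_
  filter_upwards [mem_ae_iff.2 circleAngle_compl_sphere] with w hw
  rw [← ofReal_norm, norm_mul, norm_mul, norm_real, norm_I, Real.norm_eq_abs, hε,
    mem_sphere_iff_norm.1 hw, one_mul, one_mul]

theorem variation_circleVM_univ (hε : |ε| = 1) :
    (circleVM z r ε).variation univ = ENNReal.ofReal (2 * π * |r|) := by
  rw [variation_circleVM hε, Measure.smul_apply, circleAngle_univ, smul_eq_mul, mul_comm,
    ENNReal.ofReal_mul two_pi_pos.le]

theorem support_variation_circleVM (hr : r ≠ 0) (hε : |ε| = 1) :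
    (circleVM z r ε).variation.support = sphere z |r| := by
  rw [variation_circleVM hε, support_smul_of_ne_zero (by simpa), support_circleAngle hε]

theorem mutuallySingular_variation_circleVM {a b : ℂ} {s δ : ℝ} (hr : r ≠ 0) (hε : |ε| = 1)
    (hδ : |δ| = 1) (h : (a, |r|) ≠ (b, |s|)) :
    (circleVM a r ε).variation ⟂ₘ (circleVM b s δ).variation := by
  have hε0 : ε ≠ 0 := abs_pos.1 (hε ▸ one_pos)
  rw [variation_circleVM hε, variation_circleVM hδ]
  exact (((mutuallySingular_circleAngle hr hε0 h).smul _).symm.smul _).symm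

end circleVM

theorem vmSupport_eq_closure_iUnion_sphere {κ : Type*} [Countable κ] {c : κ → ℂ} {r ε : κ → ℝ}
    {μ : VectorMeasure ℂ ℂ} (hr : ∀ k, 0 < r k) (hε : ∀ k, |ε k| = 1)
    (hinj : Function.Injective fun k ↦ (c k, r k))
    (hμ : ∀ A, MeasurableSet A → HasSum (fun k ↦ circleVM (c k) (r k) (ε k) A) (μ A)) :
    vmSupport μ = closure (⋃ k, sphere (c k) (r k)) := by
  have hsing : Pairwise fun i j ↦ (circleVM (c i) (r i) (ε i)).variation ⟂ₘ
      (circleVM (c j) (r j) (ε j)).variation := fun i j hij ↦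
    mutuallySingular_variation_circleVM (hr i).ne' (hε i) (hε j)
      (by simpa only [abs_of_pos (hr _)] using hinj.ne hij)
  rw [vmSupport_eq_support_variation, support_variation_of_hasSum hsing hμ]
  simp only [support_variation_circleVM (hr _).ne' (hε _), abs_of_pos (hr _)]

section SwissCheese

variable {ι : Type*} {z₀ : ℂ} {R : ℝ} {c : ι → ℂ} {ρ : ι → ℝ}

theorem frontier_swissCheese (hR : R ≠ 0) (hρ : ∀ i, 0 < ρ i)
    (hdisj : Pairwise (Function.onFun Disjoint fun i ↦ ball (c i) (ρ i)))
    (hsub : ∀ i, ball (c i) (ρ i) ⊆ closedBall z₀ R) :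
    frontier (closedBall z₀ R \ ⋃ i, ball (c i) (ρ i)) =
      closure (⋃ k : Option ι, sphere (k.elim z₀ c) (k.elim R ρ)) := by
  rw [frontier_sdiff_iUnion isClosed_closedBall (fun _ ↦ isOpen_ball) hsub hdisj, iUnion_option]
  simp only [frontier_closedBall _ hR, frontier_ball _ (hρ _).ne', Option.elim]

theorem injective_center_radius (hρ : ∀ i, 0 < ρ i)
    (hdisj : Pairwise (Function.onFun Disjoint fun i ↦ ball (c i) (ρ i)))
    (hproper : ∀ i, closedBall (c i) (ρ i) ≠ closedBall z₀ R) :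
    Function.Injective fun k : Option ι ↦ (k.elim z₀ c, k.elim R ρ) := by
  refine Option.injective_iff.2 ⟨fun i j hij ↦ ?_, ?_⟩
  · by_contra hne
    have hc : c i = c j := congrArg Prod.fst hij
    exact disjoint_left.1 (hdisj hne) (mem_ball_self (hρ i)) (hc ▸ mem_ball_self (hρ j))
  · rintro ⟨i, hi⟩
    exact hproper i (congrArg (fun p : ℂ × ℝ ↦ closedBall p.1 p.2) hi)

end SwissCheese

theorem semiclassical_boundary_measure {ι : Type} [Countable ι] (z0 : ℂ) (R : ℝ)
    (c : ι → ℂ) (ρ : ι → ℝ) (hR : 0 < R) (hρ : ∀ i, 0 < ρ i)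
    (hdisj : ∀ i j, i ≠ j → Disjoint (Metric.ball (c i) (ρ i)) (Metric.ball (c j) (ρ j)))
    (hsub : ∀ i, Metric.ball (c i) (ρ i) ⊆ Metric.closedBall z0 R)
    (hproper : ∀ i, Metric.closedBall (c i) (ρ i) ⊂ Metric.closedBall z0 R)
    (hsum : Summable ρ) :
    ∃ μ : VectorMeasure ℂ ℂ,
      (∀ A : Set ℂ, MeasurableSet A →
        Summable (fun i => circleVM (c i) (ρ i) (-1) A)) ∧
      (∀ A : Set ℂ, MeasurableSet A →
        μ A = circleVM z0 R 1 A + ∑' i, circleVM (c i) (ρ i) (-1) A) ∧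
      vmSupport μ =
        frontier (Metric.closedBall z0 R \ ⋃ i, Metric.ball (c i) (ρ i)) := by
  have hpair : Pairwise (Function.onFun Disjoint fun i ↦ ball (c i) (ρ i)) := hdisj
  obtain ⟨ν, hν⟩ := exists_hasSum_of_tsum_variation_ne_top
    (v := fun i ↦ circleVM (c i) (ρ i) (-1)) <| by
      simpa [variation_circleVM_univ, abs_of_pos (hρ _)] using
        (hsum.mul_left (2 * π)).tsum_ofReal_ne_top
  refine ⟨circleVM z0 R 1 + ν, fun A _ ↦ (hν A).summable, fun A _ ↦ ?_, ?_⟩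
  · rw [add_apply, (hν A).tsum_eq]
  · rw [frontier_swissCheese hR.ne' hρ hpair hsub]
    refine vmSupport_eq_closure_iUnion_sphere (ε := fun k ↦ k.elim 1 fun _ ↦ -1)
      (Option.forall.2 ⟨hR, hρ⟩) (by simp [Option.forall])
      (injective_center_radius hρ hpair fun i ↦ (hproper i).ne) fun A _ ↦ ?_
    exact hasSum_option (f := fun k : Option ι ↦
      circleVM (k.elim z0 c) (k.elim R ρ) (k.elim 1 fun _ ↦ -1) A) (hν A)
end
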